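/- Let h = 5 and let s be a finite-order linear automorphism of a 5-dimensional complex vector space W with s ≠ id and s ≠ −id. Write the eigenvalues of s (with multiplicity) as α₁, …, α₅, and suppose they satisfy the integrality condition. Writing αᵢ = e^{2πi aᵢ} with aᵢ ∈ [0,1), the age of the induced automorphism Sym²s of Sym²W satisfies λ_{Sym²W}(s) = Σ_{1≤i≤j≤5} {aᵢ + aⱼ} ≥ 1, where {x} denotes the fractional part of a real number x. -/

import Mathlib

open Polynomial

/-- The submodule of `W ⊗ W` generated by `x ⊗ y - y ⊗ x`. -/
noncomputable def SymKer (R M : Type*) [CommRing R] [AddCommGroup M] [Module R M] :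
    Submodule R (TensorProduct R M M) :=
  Submodule.span R {z | ∃ x y : M, z = x ⊗ₜ[R] y - y ⊗ₜ[R] x}

/-- The second symmetric power `Sym²M = (M ⊗ M)/⟨x⊗y - y⊗x⟩`. -/
abbrev SymSq (R M : Type*) [CommRing R] [AddCommGroup M] [Module R M] :=
  TensorProduct R M M ⧸ SymKer R M

/-- The automorphism `Sym²f` of `Sym²M` induced by `f : M → M`. -/
noncomputable def sym2Map {R M : Type*} [CommRing R] [AddCommGroup M] [Module R M]
    (f : M →ₗ[R] M) : SymSq R M →ₗ[R] SymSq R M :=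
  Submodule.mapQ (SymKer R M) (SymKer R M) (TensorProduct.map f f) (by
    rw [SymKer, Submodule.span_le]
    rintro z ⟨x, y, rfl⟩
    simp only [SetLike.mem_coe, Submodule.mem_comap, map_sub, TensorProduct.map_tmul]
    exact Submodule.subset_span ⟨f x, f y, rfl⟩)

/-- The age `λ(f)` of a finite-order endomorphism `f` of a finite-dimensional complex
vector space: writing the eigenvalues (roots of the characteristic polynomial, with
multiplicity) as `e^{2πi aⱼ}` with `aⱼ ∈ [0,1)`, the age is `Σⱼ aⱼ`. -/
noncomputable def age {T : Type*} [AddCommGroup T] [Module ℂ T] [Module.Finite ℂ T]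
    (f : Module.End ℂ T) : ℝ :=
  ((LinearMap.charpoly f).roots.map (fun z => Int.fract (Complex.arg z / (2 * Real.pi)))).sum

/-!
Write `b i = {2 a i}`, so that `a i = (b i + ⌊2 a i⌋) / 2`, and suppose that the age
`S = ∑_{i ≤ j} {a i + a j}` is less than `1`. Its diagonal terms give `∑ b i < 1`, whence
`{a i + a j} ≥ (b i + b j) / 2` for all `i, j`, with an additional `1 / 2` when `⌊2 a i⌋` and
`⌊2 a j⌋` have different parities. If both parities occurred, the latter terms alone would force
`S ≥ 1`; hence, up to a common sign, the eigenvalues are `e^{πi b i}`. Summing the former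
inequality over `i ≤ j` gives `(h + 1) ∑ b i ≤ 2 S < 2` for `h` eigenvalues, that is
`∑ b i < 1 / 3` when `h ≥ 5`. The concavity of `cos` on `[0, π / 3]` then places
`2 ∑ cos (π b i)` strictly above `2 h - 1`. Being an integer, it equals `2 h`, so all `b i` vanish
and `s = ±1`.
-/

section SymSq

variable {R M N ι : Type*} [CommRing R] [AddCommGroup M] [Module R M] [AddCommGroup N] [Module R N]

/-- The product `(x, y) ↦ x · y` of vectors in the second symmetric power, as a bilinear map. -/
noncomputable def symProd (R M : Type*) [CommRing R] [AddCommGroup M] [Module R M] :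
    M →ₗ[R] M →ₗ[R] SymSq R M :=
  (TensorProduct.mk R M M).compr₂ (SymKer R M).mkQ

lemma symProd_comm (x y : M) : symProd R M x y = symProd R M y x :=
  (Submodule.Quotient.eq _).2 (Submodule.subset_span ⟨x, y, rfl⟩)

lemma sym2Map_symProd (f : M →ₗ[R] M) (x y : M) :
    sym2Map f (symProd R M x y) = symProd R M (f x) (f y) :=
  rfl

/-- The linear map on the second symmetric power induced by a symmetric bilinear map. -/
noncomputable def symSqLift (B : M →ₗ[R] M →ₗ[R] N) (hB : ∀ x y, B x y = B y x) :
    SymSq R M →ₗ[R] N :=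
  (SymKer R M).liftQ (TensorProduct.lift B) <| by
    rw [SymKer, Submodule.span_le]
    rintro _ ⟨x, y, rfl⟩
    simp [hB x y]

lemma symSqLift_symProd (B : M →ₗ[R] M →ₗ[R] N) (hB : ∀ x y, B x y = B y x) (x y : M) :
    symSqLift B hB (symProd R M x y) = B x y :=
  rfl

variable [LinearOrder ι]

/-- The coordinate form on the second symmetric power dual to the product `v i · v j` of basis
vectors. On the diagonal the symmetrization `xᵢyⱼ + xⱼyᵢ` would give `2xᵢyᵢ`, so `xᵢyᵢ` is used
instead, which keeps the construction valid in characteristic two. -/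
noncomputable def symSqCoord (v : Module.Basis ι R M) (i j : ι) : SymSq R M →ₗ[R] R :=
  let B (k l : ι) := (LinearMap.mul R R).compl₁₂ (v.coord k) (v.coord l)
  symSqLift (if i = j then B i i else B i j + B j i) fun x y => by
    split_ifs <;> simp [B, mul_comm, add_comm]

lemma symSqCoord_symProd (v : Module.Basis ι R M) (i j : ι) (x y : M) :
    symSqCoord v i j (symProd R M x y) =
      if i = j then v.repr x i * v.repr y i
      else v.repr x i * v.repr y j + v.repr x j * v.repr y i := by
  unfold symSqCoord
  rw [symSqLift_symProd]
  split_ifs <;> simp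

lemma linearIndependent_symProd (v : Module.Basis ι R M) :
    LinearIndependent R fun p : {p : ι × ι // p.1 ≤ p.2} => symProd R M (v p.1.1) (v p.1.2) := by
  refine .of_pairwise_dual_eq_zero_one _ (fun p => symSqCoord v p.1.1 p.1.2) ?_ ?_
  · rintro ⟨⟨i, j⟩, hij⟩ ⟨⟨k, l⟩, hkl⟩ hne
    simp only [symSqCoord_symProd, Module.Basis.repr_self, Finsupp.single_apply]
    grind
  · rintro ⟨⟨i, j⟩, hij⟩
    simp only [symSqCoord_symProd, Module.Basis.repr_self, Finsupp.single_apply]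
    grind

lemma span_range_symProd_eq_top (v : Module.Basis ι R M) :
    Submodule.span R (Set.range fun p : {p : ι × ι // p.1 ≤ p.2} =>
      symProd R M (v p.1.1) (v p.1.2)) = ⊤ := by
  rw [eq_top_iff, ← Submodule.range_mkQ (SymKer R M), LinearMap.range_eq_map,
    ← (v.tensorProduct v).span_eq, Submodule.map_span, Submodule.span_le]
  rintro _ ⟨_, ⟨⟨i, j⟩, rfl⟩, rfl⟩
  rw [Module.Basis.tensorProduct_apply]
  change symProd R M (v i) (v j) ∈ _
  rcases le_total i j with h | h
  · exact Submodule.subset_span ⟨⟨(i, j), h⟩, rfl⟩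
  · rw [symProd_comm]
    exact Submodule.subset_span ⟨⟨(j, i), h⟩, rfl⟩

/-- The basis of the second symmetric power formed by the products `v i · v j` with `i ≤ j`. -/
noncomputable def symSqBasis (v : Module.Basis ι R M) :
    Module.Basis {p : ι × ι // p.1 ≤ p.2} R (SymSq R M) :=
  .mk (linearIndependent_symProd v) (span_range_symProd_eq_top v).ge

lemma symSqBasis_apply (v : Module.Basis ι R M) (p : {p : ι × ι // p.1 ≤ p.2}) :
    symSqBasis v p = symProd R M (v p.1.1) (v p.1.2) :=
  Module.Basis.mk_apply ..

end SymSq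

section Eigenbasis

lemma roots_finset_prod_X_sub_C {R ι : Type*} [CommRing R] [IsDomain R] (s : Finset ι) (α : ι → R) :
    (∏ i ∈ s, (X - C (α i))).roots = s.val.map α := by
  simpa using roots_multiset_prod_X_sub_C (s.val.map α)

lemma charpoly_eq_prod_of_eigenbasis {R M ι : Type*} [CommRing R] [AddCommGroup M] [Module R M]
    [Module.Free R M] [Module.Finite R M] [Fintype ι] (f : Module.End R M) (b : Module.Basis ι R M)
    (μ : ι → R) (hb : ∀ i, f (b i) = μ i • b i) : f.charpoly = ∏ i, (X - C (μ i)) := by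
  classical
  have hdiag : f.toMatrix b b = Matrix.diagonal μ := by
    ext i j
    rcases eq_or_ne i j with rfl | hij
    · simp [LinearMap.toMatrix_apply, hb]
    · simp [LinearMap.toMatrix_apply, hb, hij]
  rw [← f.charpoly_toMatrix b, hdiag, Matrix.charpoly_diagonal]

lemma isSemisimple_of_pow_eq_one {K V : Type*} [Field K] [AddCommGroup V] [Module K V]
    {f : Module.End K V} {n : ℕ} (hn : (n : K) ≠ 0) (hf : f ^ n = 1) : f.IsSemisimple :=
  Module.End.isSemisimple_of_squarefree_aeval_eq_zero
    (X_pow_sub_one_separable_iff.2 hn).squarefree (by simp [hf])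

variable {K V ι : Type*} [Field K] [AddCommGroup V] [Module K V] [FiniteDimensional K V] [Fintype ι]

lemma charpoly_sym2Map_of_eigenbasis [LinearOrder ι] (f : Module.End K V) (v : Module.Basis ι K V)
    (μ : ι → K) (hv : ∀ i, f (v i) = μ i • v i) :
    (sym2Map f).charpoly = ∏ p : {p : ι × ι // p.1 ≤ p.2}, (X - C (μ p.1.1 * μ p.1.2)) :=
  charpoly_eq_prod_of_eigenbasis _ (symSqBasis v) _ fun p => by
    simp [symSqBasis_apply, sym2Map_symProd, hv, smul_smul, mul_comm]

lemma exists_eigenbasis_of_charpoly_eq_prod [IsAlgClosed K] {f : Module.End K V}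
    (hf : f.IsSemisimple) {α : ι → K} (hα : f.charpoly = ∏ i, (X - C (α i))) :
    ∃ v : Module.Basis ι K V, ∀ i, f (v i) = α i • v i := by
  classical
  have hfinrank (μ : K) : Module.finrank K (f.eigenspace μ) = Fintype.card {i // α i = μ} := by
    rw [← hf.isFinitelySemisimple.maxGenEigenspace_eq_eigenspace,
      LinearMap.finrank_maxGenEigenspace_eq, ← count_roots, hα, roots_finset_prod_X_sub_C,
      Multiset.count_map, Fintype.card_subtype]
    simp only [eq_comm]
    rfl
  have hInternal : DirectSum.IsInternal f.eigenspace :=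
    DirectSum.isInternal_submodule_of_iSupIndep_of_iSup_eq_top f.eigenspaces_iSupIndep
      hf.iSup_eigenspace_eq_top
  let b (μ : K) : Module.Basis {i // α i = μ} K (f.eigenspace μ) :=
    (Module.finBasisOfFinrankEq K _ (hfinrank μ)).reindex (Fintype.equivFin _).symm
  refine ⟨(hInternal.collectedBasis b).reindex (Equiv.sigmaFiberEquiv α), fun i => ?_⟩
  simpa using Module.End.mem_eigenspace_iff.1
    (hInternal.collectedBasis_mem b ((Equiv.sigmaFiberEquiv α).symm i))

end Eigenbasis

section Age

variable {T ι : Type*} [AddCommGroup T] [Module ℂ T] [FiniteDimensional ℂ T] [Fintype ι]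

lemma fract_arg_exp_div_two_pi (x : ℝ) :
    Int.fract ((Complex.exp (2 * Real.pi * Complex.I * x)).arg / (2 * Real.pi)) = Int.fract x := by
  have hpi : 2 * Real.pi ≠ 0 := Real.two_pi_pos.ne'
  rw [Complex.arg_exp, show (2 * Real.pi * Complex.I * x : ℂ).im = 2 * Real.pi * x by simp,
    toIocMod, sub_div, zsmul_eq_mul, mul_div_cancel_right₀ _ hpi, Int.fract_sub_intCast,
    mul_div_cancel_left₀ _ hpi]

lemma age_eq_sum_fract {f : Module.End ℂ T} (a : ι → ℝ)
    (hf : f.charpoly = ∏ i, (X - C (Complex.exp (2 * Real.pi * Complex.I * a i)))) :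
    age f = ∑ i, Int.fract (a i) := by
  rw [age, hf, roots_finset_prod_X_sub_C, Multiset.map_map]
  simp only [Function.comp_def, fract_arg_exp_div_two_pi]
  rfl

lemma age_sym2Map_of_eigenbasis [LinearOrder ι] (s : Module.End ℂ T) (v : Module.Basis ι ℂ T)
    (a : ι → ℝ) (hv : ∀ i, s (v i) = Complex.exp (2 * Real.pi * Complex.I * a i) • v i) :
    age (sym2Map s) = ∑ p : ι × ι with p.1 ≤ p.2, Int.fract (a p.1 + a p.2) := by
  rw [age_eq_sum_fract (fun p : {p : ι × ι // p.1 ≤ p.2} => a p.1.1 + a p.1.2),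
    Finset.sum_subtype (p := fun p : ι × ι => p.1 ≤ p.2) _ (by simp)]
  simp [charpoly_sym2Map_of_eigenbasis s v _ hv, ← Complex.exp_add, mul_add]

end Age

section FractionalParts

lemma two_nsmul_sum_filter_le {ι A : Type*} [Fintype ι] [LinearOrder ι] [AddCommMonoid A]
    (f : ι → ι → A) (hf : ∀ i j, f i j = f j i) :
    2 • ∑ p : ι × ι with p.1 ≤ p.2, f p.1 p.2 = ∑ i, ∑ j, f i j + ∑ i, f i i := by
  have hle : ∑ p : ι × ι with p.1 ≤ p.2, f p.1 p.2 = ∑ i, ∑ j, if i ≤ j then f i j else 0 := by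
    rw [Finset.sum_filter, Fintype.sum_prod_type]
  have hge : ∑ p : ι × ι with p.1 ≤ p.2, f p.1 p.2 = ∑ i, ∑ j, if j ≤ i then f i j else 0 := by
    rw [hle, Finset.sum_comm]
    simp only [hf]
  have hdiag : ∑ i, f i i = ∑ i, ∑ j, if i = j then f i j else 0 := by simp
  rw [two_nsmul]
  nth_rw 1 [hle]
  rw [hge, hdiag]
  simp only [← Finset.sum_add_distrib]
  refine Finset.sum_congr rfl fun i _ => Finset.sum_congr rfl fun j _ => ?_
  rcases lt_trichotomy i j with h | rfl | h
  · simp [h.le, h.not_ge, h.ne]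
  · simp
  · simp [h.le, h.not_ge, h.ne']

section FloorRing

variable {R : Type*} [CommRing R] [LinearOrder R] [IsStrictOrderedRing R] [FloorRing R] {x y : R}

lemma floor_add_of_fract_add_lt_one (h : Int.fract x + Int.fract y < 1) :
    ⌊x + y⌋ = ⌊x⌋ + ⌊y⌋ := by
  rw [Int.floor_eq_iff]
  push_cast
  constructor <;> linarith [Int.floor_add_fract x, Int.floor_add_fract y, Int.fract_nonneg x,
    Int.fract_nonneg y]

lemma one_le_two_mul_fract_of_odd_floor (h : Odd ⌊2 * x⌋) : 1 ≤ 2 * Int.fract x := by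
  contrapose! h
  have hfloor : ⌊2 * x⌋ = 2 * ⌊x⌋ := by
    rw [two_mul, floor_add_of_fract_add_lt_one (by linarith), two_mul]
  simp [hfloor]

lemma one_le_two_mul_fract_add_of_odd (h : Int.fract (2 * x) + Int.fract (2 * y) < 1)
    (hodd : Odd (⌊2 * x⌋ + ⌊2 * y⌋)) : 1 ≤ 2 * Int.fract (x + y) :=
  one_le_two_mul_fract_of_odd_floor <| by rwa [mul_add, floor_add_of_fract_add_lt_one h]

lemma fract_two_mul_le (x : R) : Int.fract (2 * x) ≤ 2 * Int.fract x := by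
  simpa only [two_mul] using Int.fract_add_le x x

lemma fract_two_mul_add_le (h : Int.fract (2 * x) + Int.fract (2 * y) < 1) :
    Int.fract (2 * x) + Int.fract (2 * y) ≤ 2 * Int.fract (x + y) :=
  calc Int.fract (2 * x) + Int.fract (2 * y) = Int.fract (2 * (x + y)) := by
        rw [mul_add, ← Int.self_sub_floor (2 * x + 2 * y), floor_add_of_fract_add_lt_one h,
          ← Int.self_sub_floor, ← Int.self_sub_floor]
        push_cast
        ring
    _ ≤ 2 * Int.fract (x + y) := fract_two_mul_le _

end FloorRing

variable {ι R : Type*} [Fintype ι] [LinearOrder ι] [CommRing R] [LinearOrder R] [FloorRing R]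

lemma two_mul_sum_fract_add (a : ι → R) :
    2 * ∑ p : ι × ι with p.1 ≤ p.2, Int.fract (a p.1 + a p.2) =
      ∑ i, ∑ j, Int.fract (a i + a j) + ∑ i, Int.fract (2 * a i) := by
  simpa only [nsmul_eq_mul, Nat.cast_ofNat, two_mul (a _)] using
    two_nsmul_sum_filter_le (fun i j => Int.fract (a i + a j)) fun i j => by rw [add_comm]

variable [IsStrictOrderedRing R] {a : ι → R}

lemma sum_fract_two_mul_le (a : ι → R) :
    ∑ i, Int.fract (2 * a i) ≤ ∑ p : ι × ι with p.1 ≤ p.2, Int.fract (a p.1 + a p.2) := by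
  have hdiag : ∑ i, Int.fract (2 * a i) ≤ ∑ i, ∑ j, Int.fract (a i + a j) :=
    Finset.sum_le_sum fun i _ => by
      rw [two_mul]
      exact Finset.single_le_sum (f := fun j => Int.fract (a i + a j))
        (fun j _ => Int.fract_nonneg _) (Finset.mem_univ i)
  linarith [two_mul_sum_fract_add a]

lemma fract_two_mul_add_fract_two_mul_lt_one
    (hS : ∑ p : ι × ι with p.1 ≤ p.2, Int.fract (a p.1 + a p.2) < 1) {i j : ι} (hij : i ≠ j) :
    Int.fract (2 * a i) + Int.fract (2 * a j) < 1 :=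
  (Finset.add_le_sum (f := fun i => Int.fract (2 * a i)) (fun _ _ => Int.fract_nonneg _)
    (Finset.mem_univ i) (Finset.mem_univ j) hij).trans_lt ((sum_fract_two_mul_le a).trans_lt hS)

lemma card_add_one_mul_sum_fract_two_mul_le
    (hS : ∑ p : ι × ι with p.1 ≤ p.2, Int.fract (a p.1 + a p.2) < 1) :
    (Fintype.card ι + 1) * ∑ i, Int.fract (2 * a i) ≤
      2 * ∑ p : ι × ι with p.1 ≤ p.2, Int.fract (a p.1 + a p.2) := by
  have hpair (i j : ι) : Int.fract (2 * a i) + Int.fract (2 * a j) ≤ 2 * Int.fract (a i + a j) := by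
    rcases eq_or_ne i j with rfl | hij
    · rw [← two_mul, ← two_mul]
    · exact fract_two_mul_add_le (fract_two_mul_add_fract_two_mul_lt_one hS hij)
  have hsum : 2 * (Fintype.card ι * ∑ i, Int.fract (2 * a i)) ≤
      2 * ∑ i, ∑ j, Int.fract (a i + a j) :=
    calc 2 * (Fintype.card ι * ∑ i, Int.fract (2 * a i))
        = ∑ i, ∑ j, (Int.fract (2 * a i) + Int.fract (2 * a j)) := by
          simp [Finset.sum_add_distrib, ← Finset.mul_sum, two_mul]
      _ ≤ ∑ i, ∑ j, 2 * Int.fract (a i + a j) :=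
          Finset.sum_le_sum fun i _ => Finset.sum_le_sum fun j _ => hpair i j
      _ = 2 * ∑ i, ∑ j, Int.fract (a i + a j) := by simp only [Finset.mul_sum]
  linarith [two_mul_sum_fract_add a]

lemma one_le_two_mul_fract_add_add_fract_add
    (hS : ∑ p : ι × ι with p.1 ≤ p.2, Int.fract (a p.1 + a p.2) < 1) {i j : ι}
    (hi : Odd ⌊2 * a i⌋) (hj : Even ⌊2 * a j⌋) (l : ι) :
    1 ≤ 2 * (Int.fract (a i + a l) + Int.fract (a j + a l)) := by
  have hfar {m : ι} (hm : Odd (⌊2 * a m⌋ + ⌊2 * a l⌋)) : 1 ≤ 2 * Int.fract (a m + a l) := by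
    have hml : m ≠ l := by
      rintro rfl
      exact Int.not_even_iff_odd.2 hm (Even.add_self _)
    exact one_le_two_mul_fract_add_of_odd (fract_two_mul_add_fract_two_mul_lt_one hS hml) hm
  rcases Int.even_or_odd ⌊2 * a l⌋ with hl | hl
  · linarith [hfar (hi.add_even hl), Int.fract_nonneg (a j + a l)]
  · linarith [hfar (hj.add_odd hl), Int.fract_nonneg (a i + a l)]

lemma forall_even_or_forall_odd_floor_two_mul (hι : 4 ≤ Fintype.card ι)
    (hS : ∑ p : ι × ι with p.1 ≤ p.2, Int.fract (a p.1 + a p.2) < 1) :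
    (∀ i, Even ⌊2 * a i⌋) ∨ ∀ i, Odd ⌊2 * a i⌋ := by
  by_contra! ⟨⟨i, hi⟩, j, hj⟩
  rw [Int.not_even_iff_odd] at hi
  rw [Int.not_odd_iff_even] at hj
  have hij : i ≠ j := by rintro rfl; exact Int.not_even_iff_odd.2 hi hj
  have hrows : ∑ l, Int.fract (a i + a l) + ∑ l, Int.fract (a j + a l) ≤
      ∑ m, ∑ l, Int.fract (a m + a l) :=
    Finset.add_le_sum (f := fun m => ∑ l, Int.fract (a m + a l))
      (fun _ _ => Finset.sum_nonneg fun _ _ => Int.fract_nonneg _)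
      (Finset.mem_univ i) (Finset.mem_univ j) hij
  have hcard : (Fintype.card ι : R) ≤
      2 * (∑ l, Int.fract (a i + a l) + ∑ l, Int.fract (a j + a l)) :=
    calc (Fintype.card ι : R) = ∑ _ : ι, 1 := by simp
      _ ≤ ∑ l, 2 * (Int.fract (a i + a l) + Int.fract (a j + a l)) :=
          Finset.sum_le_sum fun l _ => one_le_two_mul_fract_add_add_fract_add hS hi hj l
      _ = _ := by rw [← Finset.mul_sum, Finset.sum_add_distrib]
  have hι' : (4 : R) ≤ Fintype.card ι := mod_cast hι
  have hdiag : 0 ≤ ∑ l, Int.fract (2 * a l) := Finset.sum_nonneg fun _ _ => Int.fract_nonneg _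
  linarith [two_mul_sum_fract_add a]

end FractionalParts

section Integrality

variable {ι : Type*} [Fintype ι]

lemma one_sub_three_halves_mul_le_cos_pi_mul {x : ℝ} (hx₀ : 0 ≤ x) (hx : x ≤ 1 / 3) :
    1 - 3 / 2 * x ≤ Real.cos (Real.pi * x) := by
  have hpi := Real.pi_pos
  have hzero : 0 ∈ Set.Icc (-(Real.pi / 2)) (Real.pi / 2) := ⟨by linarith, by linarith⟩
  have hthird : Real.pi / 3 ∈ Set.Icc (-(Real.pi / 2)) (Real.pi / 2) := ⟨by linarith, by linarith⟩
  calc 1 - 3 / 2 * x = (1 - 3 * x) • Real.cos 0 + (3 * x) • Real.cos (Real.pi / 3) := by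
        simp only [smul_eq_mul, Real.cos_zero, Real.cos_pi_div_three]
        ring
    _ ≤ Real.cos ((1 - 3 * x) • 0 + (3 * x) • (Real.pi / 3)) :=
        strictConcaveOn_cos_Icc.concaveOn.2 hzero hthird (by linarith) (by linarith) (by ring)
    _ = Real.cos (Real.pi * x) := by
        congr 1
        simp only [smul_eq_mul]
        ring

lemma eq_zero_of_two_mul_sum_cos_pi_mul_eq_int {b : ι → ℝ} (hb : ∀ i, 0 ≤ b i)
    (hsum : ∑ i, b i < 1 / 3) {m : ℤ} (hm : 2 * ∑ i, Real.cos (Real.pi * b i) = m) (i : ι) :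
    b i = 0 := by
  have hlt (j : ι) : b j < 1 / 3 :=
    (Finset.single_le_sum (fun l _ => hb l) (Finset.mem_univ j)).trans_lt hsum
  have hnonneg (j : ι) : 0 ≤ 1 - Real.cos (Real.pi * b j) := sub_nonneg.2 (Real.cos_le_one _)
  have hdefect : ∑ j, (1 - Real.cos (Real.pi * b j)) < 1 / 2 :=
    calc ∑ j, (1 - Real.cos (Real.pi * b j)) ≤ ∑ j, 3 / 2 * b j :=
          Finset.sum_le_sum fun j _ => by
            linarith [one_sub_three_halves_mul_le_cos_pi_mul (hb j) (hlt j).le]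
      _ = 3 / 2 * ∑ j, b j := Finset.mul_sum .. |>.symm
      _ < 1 / 2 := by linarith
  have hcard : ∑ j, (1 - Real.cos (Real.pi * b j)) = Fintype.card ι - m / 2 := by
    rw [← hm]
    simp
  have hm' : 2 * Fintype.card ι ≤ m := by
    have : (2 * Fintype.card ι : ℝ) < m + 1 := by linarith
    exact Int.lt_add_one_iff.1 (mod_cast this)
  have hzero : ∑ j, (1 - Real.cos (Real.pi * b j)) = 0 := by
    have : (2 * Fintype.card ι : ℝ) ≤ m := mod_cast hm'
    exact le_antisymm (by linarith) (Finset.sum_nonneg fun j _ => hnonneg j)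
  have hcos : Real.cos (Real.pi * b i) = 1 := by
    linarith [(Finset.sum_eq_zero_iff_of_nonneg fun j _ => hnonneg j).1 hzero i (Finset.mem_univ i)]
  have hpi := Real.pi_pos
  have := (Real.cos_eq_one_iff_of_lt_of_lt (by nlinarith [hb i]) (by nlinarith [hlt i])).1 hcos
  exact (mul_eq_zero.1 this).resolve_left hpi.ne'

lemma cos_two_pi_mul_eq (x : ℝ) :
    Real.cos (2 * Real.pi * x) = (-1) ^ ⌊2 * x⌋ * Real.cos (Real.pi * Int.fract (2 * x)) := by
  rw [← Real.cos_add_int_mul_pi]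
  congr 1
  linear_combination -Real.pi * Int.floor_add_fract (2 * x)

lemma exp_two_pi_I_mul_re (x : ℝ) :
    (Complex.exp (2 * Real.pi * Complex.I * x)).re = Real.cos (2 * Real.pi * x) := by
  simp [Complex.exp_re]

lemma exp_two_pi_I_mul_eq {x : ℝ} (hx : Int.fract (2 * x) = 0) :
    Complex.exp (2 * Real.pi * Complex.I * x) = (-1) ^ ⌊2 * x⌋ := by
  have h2x : (2 * x : ℂ) = ⌊2 * x⌋ := by
    have := Int.floor_add_fract (2 * x)
    rw [hx, add_zero] at this
    exact_mod_cast this.symm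
  rw [← Complex.exp_pi_mul_I, ← Complex.exp_int_mul, ← h2x]
  congr 1
  ring

lemma exp_eq_one_or_neg_one_of_sum_fract_add_lt_one [LinearOrder ι] (hι : 5 ≤ Fintype.card ι)
    {a : ι → ℝ} {m : ℤ} (hm : 2 * ∑ i, Real.cos (2 * Real.pi * a i) = m)
    (hS : ∑ p : ι × ι with p.1 ≤ p.2, Int.fract (a p.1 + a p.2) < 1) :
    (∀ i, Complex.exp (2 * Real.pi * Complex.I * a i) = 1) ∨
      ∀ i, Complex.exp (2 * Real.pi * Complex.I * a i) = -1 := by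
  have hnonneg (i : ι) : 0 ≤ Int.fract (2 * a i) := Int.fract_nonneg _
  have hsum : ∑ i, Int.fract (2 * a i) < 1 / 3 := by
    have hι' : (5 : ℝ) ≤ Fintype.card ι := mod_cast hι
    have hmul := card_add_one_mul_sum_fract_two_mul_le hS
    have hsum_nonneg := Finset.sum_nonneg fun i (_ : i ∈ Finset.univ) => hnonneg i
    linarith [mul_le_mul_of_nonneg_right hι' hsum_nonneg]
  simp only [cos_two_pi_mul_eq] at hm
  refine (forall_even_or_forall_odd_floor_two_mul (by lia) hS).imp (fun heven i => ?_)
    fun hodd i => ?_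
  · have hzero := eq_zero_of_two_mul_sum_cos_pi_mul_eq_int hnonneg hsum (m := m)
      (by simpa [(heven _).neg_one_zpow] using hm)
    rw [exp_two_pi_I_mul_eq (hzero i), (heven i).neg_one_zpow]
  · have hzero := eq_zero_of_two_mul_sum_cos_pi_mul_eq_int hnonneg hsum (m := -m)
      (by simp [← hm, (hodd _).neg_one_zpow])
    rw [exp_two_pi_I_mul_eq (hzero i), (hodd i).neg_one_zpow]

lemma exists_int_two_mul_sum_re_eq {α : ι → ℂ}
    (hα : ∃ q : ℤ[X], q.map (Int.castRingHom ℂ) =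
      ∏ i, (X - C (α i)) * (X - C (starRingEnd ℂ (α i)))) :
    ∃ m : ℤ, 2 * ∑ i, (α i).re = m := by
  obtain ⟨q, hq⟩ := hα
  have hmonic (β : ι → ℂ) : (∏ i, (X - C (β i))).Monic :=
    monic_prod_of_monic _ _ fun i _ => monic_X_sub_C _
  have hcoeff := congrArg nextCoeff hq
  rw [Finset.prod_mul_distrib, nextCoeff_map Int.cast_injective,
    (hmonic _).nextCoeff_mul (hmonic _), prod_X_sub_C_nextCoeff, prod_X_sub_C_nextCoeff] at hcoeff
  have hre := congrArg Complex.re hcoeff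
  simp only [eq_intCast, Complex.intCast_re, Complex.add_re, Complex.neg_re, Complex.re_sum,
    Complex.conj_re] at hre
  exact ⟨-q.nextCoeff, by push_cast; linarith⟩

end Integrality

theorem age_sym2_ge_one_of_dim_five_general {ι W : Type*} [Fintype ι] [LinearOrder ι]
    (hι : 5 ≤ Fintype.card ι) [AddCommGroup W] [Module ℂ W] [FiniteDimensional ℂ W]
    (s : Module.End ℂ W) (hs : s.IsSemisimple) (hs1 : s ≠ 1) (hs2 : s ≠ -1) (a : ι → ℝ)
    (heig : s.charpoly = ∏ i, (X - C (Complex.exp (2 * Real.pi * Complex.I * a i))))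
    (htrace : ∃ m : ℤ, 2 * ∑ i, (Complex.exp (2 * Real.pi * Complex.I * a i)).re = m) :
    age (sym2Map s) = ∑ p : ι × ι with p.1 ≤ p.2, Int.fract (a p.1 + a p.2) ∧
      1 ≤ ∑ p : ι × ι with p.1 ≤ p.2, Int.fract (a p.1 + a p.2) := by
  obtain ⟨v, hv⟩ := exists_eigenbasis_of_charpoly_eq_prod hs heig
  refine ⟨age_sym2Map_of_eigenbasis s v a hv, ?_⟩
  by_contra! hS
  obtain ⟨m, hm⟩ := htrace
  simp only [exp_two_pi_I_mul_re] at hm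
  rcases exp_eq_one_or_neg_one_of_sum_fract_add_lt_one hι hm hS with hone | hneg
  · exact hs1 (v.ext fun i => by simp [hv, hone])
  · exact hs2 (v.ext fun i => by simp [hv, hneg])

/-- Let `s` be a finite-order automorphism of a `5`-dimensional complex vector space `W`,
with `s ≠ ±1`, whose eigenvalues `αᵢ = e^{2πi aᵢ}` (with `aᵢ ∈ [0,1)`) satisfy the
integrality condition that `∏ᵢ (X - αᵢ)(X - α̅ᵢ)` has integer coefficients.  Then the age
of the induced automorphism `Sym²s` of `Sym²W` satisfies
`λ_{Sym²W}(s) = Σ_{i ≤ j} {aᵢ + aⱼ} ≥ 1`. -/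
theorem age_sym2_ge_one_of_dim_five
    (W : Type*) [AddCommGroup W] [Module ℂ W] [FiniteDimensional ℂ W]
    (hW : Module.finrank ℂ W = 5)
    (s : Module.End ℂ W) (n : ℕ) (hn : 0 < n) (hord : s ^ n = 1)
    (hs1 : s ≠ 1) (hs2 : s ≠ -1)
    (a : Fin 5 → ℝ) (ha : ∀ i, a i ∈ Set.Ico (0 : ℝ) 1)
    (heig : LinearMap.charpoly s =
      ∏ i, (X - C (Complex.exp (2 * Real.pi * Complex.I * (a i)))))
    (hint : ∃ q : Polynomial ℤ, q.map (Int.castRingHom ℂ) =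
      ∏ i, (X - C (Complex.exp (2 * Real.pi * Complex.I * (a i)))) *
        (X - C (starRingEnd ℂ (Complex.exp (2 * Real.pi * Complex.I * (a i)))))) :
    age (sym2Map s) =
      ∑ p ∈ Finset.univ.filter (fun p : Fin 5 × Fin 5 => p.1 ≤ p.2),
        Int.fract (a p.1 + a p.2) ∧
    1 ≤ ∑ p ∈ Finset.univ.filter (fun p : Fin 5 × Fin 5 => p.1 ≤ p.2),
        Int.fract (a p.1 + a p.2) :=
  age_sym2_ge_one_of_dim_five_general (by simp) s
    (isSemisimple_of_pow_eq_one (Nat.cast_ne_zero.2 hn.ne') hord) hs1 hs2 a heig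
    (exists_int_two_mul_sum_re_eq hint)
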